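/- Let L be an encoding for the degree sequence d with exactly p 2-defect edges and exactly q (−1)-defect edges, and let a_1, b_1, a_2, b_2 ∈ [n] be four distinct vertices with L(a_1, b_1) ≠ 0 and L(a_2, b_2) = 1. Define η* = η_{a_1} + η_{b_1} + η_{a_2} + η_{b_2} and ζ* = ζ_{a_1} + ζ_{b_1} + ζ_{a_2} + ζ_{b_2}. Then the number of ordered pairs of vertices (a_3, b_3) such that L(a_3, b_3) = 1, L(a_1, b_3) = L(a_3, b_2) = 0, and a_1, b_1, a_2, b_2, a_3, b_3 are all distinct is at least M − 4p + 2q − ( d_max·( 2·d_max − (ζ_{a_1} + ζ_{b_2}) + 2·(η_{a_1} + η_{b_2}) + 4 ) + η* − 2·ζ* + Σ_{x ∈ N̂_L(a_1)} (η_x − 2·ζ_x) + Σ_{y ∈ N̂_L(b_2)} (η_y − 2·ζ_y) ). -/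

import Mathlib

/-!
Let `s v` be the number of `w` with `L v w = 1`. The row sums give `s v = d v - 2 ζ v + η v`, so there
are `∑ v, s v = M - 4 p + 2 q` ordered pairs `(a₃, b₃)` with label `1`, and the neighbourhood of `v`
has size `s v + ζ v + η v = d v - ζ v + 2 η v`.

Such a pair is counted unless one of the following holds: `b₃ ∈ N̂(a₁)`, `a₃ ∈ N̂(b₂)`, `b₃ = a₁`,
`b₃ = a₂`, `a₃ = b₁` or `a₃ = b₂`. The other four coincidences are already covered:
`b₃ = b₁` and `a₃ = a₁` force `b₃ ∈ N̂(a₁)`, while `a₃ = a₂` and `b₃ = b₂` force `a₃ ∈ N̂(b₂)`.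
This is the pointwise inequality of indicators `pointwise_bound`; summing it over all pairs
bounds the excluded pairs by
`∑ x ∈ N̂(a₁), s x + ∑ y ∈ N̂(b₂), s y + s a₁ + s a₂ + s b₁ + s b₂`, and `d v ≤ d_max` finishes.
-/

open scoped Classical

noncomputable section

namespace SwitchChain

variable {n : ℕ}

/-- `M d` is the sum of the degrees. -/
def M (d : Fin n → ℕ) : ℕ := ∑ j, d j

/-- The maximum degree. -/
def dmax (d : Fin n → ℕ) : ℕ := Finset.univ.sup d

/-- An encoding for the degree sequence `d`: a symmetric integer matrix with zero
diagonal, entries in `{-1, 0, 1, 2}`, and row sums `d`. -/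
def IsEncoding (d : Fin n → ℕ) (L : Matrix (Fin n) (Fin n) ℤ) : Prop :=
  (∀ i j, L i j = L j i) ∧ (∀ i, L i i = 0) ∧
  (∀ i j, L i j = -1 ∨ L i j = 0 ∨ L i j = 1 ∨ L i j = 2) ∧
  (∀ i, ∑ j, L i j = (d i : ℤ))

/-- The set of (unordered) edges of `L` carrying the label `c`. -/
def labelEdges (L : Matrix (Fin n) (Fin n) ℤ) (c : ℤ) : Set (Sym2 (Fin n)) :=
  {e | ∃ x y : Fin n, e = s(x, y) ∧ x ≠ y ∧ L x y = c}

/-- `N̂_L(v)`: all neighbours of `v` (along edges with nonzero label). -/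
def nbrHat (L : Matrix (Fin n) (Fin n) ℤ) (v : Fin n) : Set (Fin n) :=
  {w | w ≠ v ∧ L v w ≠ 0}

/-- `ζ_v`: the number of 2-defect edges incident with `v`. -/
def zeta (L : Matrix (Fin n) (Fin n) ℤ) (v : Fin n) : ℕ :=
  {w | w ≠ v ∧ L v w = 2}.ncard

/-- `η_v`: the number of (−1)-defect edges incident with `v`. -/
def eta (L : Matrix (Fin n) (Fin n) ℤ) (v : Fin n) : ℕ :=
  {w | w ≠ v ∧ L v w = -1}.ncard

/-- The number of `w` with `L v w = c`, as an integer sum of indicators. -/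
def rowCount (L : Matrix (Fin n) (Fin n) ℤ) (c : ℤ) (v : Fin n) : ℤ :=
  ∑ w, if L v w = c then 1 else 0

lemma ncard_row_eq {d : Fin n → ℕ} {L : Matrix (Fin n) (Fin n) ℤ} (hL : IsEncoding d L)
    {c : ℤ} (hc : c ≠ 0) (v : Fin n) :
    (({w | w ≠ v ∧ L v w = c}.ncard : ℕ) : ℤ) = rowCount L c v := by
  have h : {w | w ≠ v ∧ L v w = c} = ((Finset.univ.filter fun w => L v w = c : Finset _) : Set _) := by
    ext w
    simp only [Set.mem_ofPred_eq, Finset.coe_filter, Finset.mem_univ, true_and, and_iff_right_iff_imp]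
    rintro h rfl
    exact hc (h ▸ hL.2.1 w)
  rw [h, Set.ncard_coe_finset, rowCount, Finset.sum_boole]

/-- Handshake lemma for the graph of edges labelled `c`. -/
lemma sum_rowCount {d : Fin n → ℕ} {L : Matrix (Fin n) (Fin n) ℤ} (hL : IsEncoding d L)
    {c : ℤ} (hc : c ≠ 0) :
    ∑ v, rowCount L c v = 2 * ((labelEdges L c).ncard : ℤ) := by
  let G : SimpleGraph (Fin n) :=
    { Adj := fun x y => x ≠ y ∧ L x y = c
      symm := ⟨fun x y h => ⟨h.1.symm, by rw [hL.1]; exact h.2⟩⟩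
      loopless := ⟨fun x h => h.1 rfl⟩ }
  have hE : labelEdges L c = (G.edgeFinset : Set _) := by
    ext e
    induction e using Sym2.ind with
    | _ x y =>
      simp only [labelEdges, Set.mem_ofPred_eq, SimpleGraph.coe_edgeFinset, SimpleGraph.mem_edgeSet]
      constructor
      · rintro ⟨a, b, hab, h⟩
        have : G.Adj a b := h
        rwa [← SimpleGraph.mem_edgeSet, ← hab] at this
      · exact fun h => ⟨x, y, rfl, h⟩
  rw [hE, Set.ncard_coe_finset]
  have h := G.sum_degrees_eq_twice_card_edges
  have h' : ∀ v, rowCount L c v = (G.degree v : ℤ) := by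
    intro v
    rw [← ncard_row_eq hL hc, ← SimpleGraph.card_neighborFinset_eq_degree, ← Set.ncard_coe_finset]
    congr 2
    ext w
    simp [G, eq_comm]
  simp_rw [h']
  exact_mod_cast h

lemma rowCount_one {d : Fin n → ℕ} {L : Matrix (Fin n) (Fin n) ℤ} (hL : IsEncoding d L)
    (v : Fin n) : rowCount L 1 v = d v - 2 * rowCount L 2 v + rowCount L (-1) v := by
  rw [← hL.2.2.2 v]
  simp only [rowCount, Finset.mul_sum, ← Finset.sum_sub_distrib, ← Finset.sum_add_distrib]
  refine Finset.sum_congr rfl fun w _ => ?_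
  rcases hL.2.2.1 v w with h | h | h | h <;> simp [h]

lemma card_nbrHat {d : Fin n → ℕ} {L : Matrix (Fin n) (Fin n) ℤ} (hL : IsEncoding d L)
    (v : Fin n) : ((Finset.univ.filter (· ∈ nbrHat L v)).card : ℤ) =
      d v - rowCount L 2 v + 2 * rowCount L (-1) v := by
  rw [← hL.2.2.2 v, Finset.card_filter]
  push_cast
  simp only [rowCount, Finset.mul_sum, ← Finset.sum_sub_distrib, ← Finset.sum_add_distrib]
  refine Finset.sum_congr rfl fun w _ => ?_
  have hw : L v w ≠ 0 → w ≠ v := by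
    rintro h rfl
    exact h (hL.2.1 w)
  rcases hL.2.2.1 v w with h | h | h | h <;> simp [nbrHat, h] <;> simp_all

/-- The left side counts the pairs with label `1` having a prescribed endpoint in `N̂(v)`; both `|N̂(v)|` and
each `rowCount L 1 x` are bounded through `d ≤ dmax d`. -/
lemma sum_nbrHat_le {d : Fin n → ℕ} {L : Matrix (Fin n) (Fin n) ℤ} (hL : IsEncoding d L)
    (v : Fin n) :
    ∑ x ∈ Finset.univ.filter (· ∈ nbrHat L v), rowCount L 1 x ≤
      (dmax d : ℤ) * (dmax d - rowCount L 2 v + 2 * rowCount L (-1) v) +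
      ∑ x ∈ Finset.univ.filter (· ∈ nbrHat L v), (rowCount L (-1) x - 2 * rowCount L 2 x) := by
  have hd : ∀ x, (d x : ℤ) ≤ dmax d := fun x => by
    exact_mod_cast Finset.le_sup (f := d) (Finset.mem_univ x)
  have h1 : ∑ x ∈ Finset.univ.filter (· ∈ nbrHat L v), rowCount L 1 x ≤
      ∑ x ∈ Finset.univ.filter (· ∈ nbrHat L v),
        ((dmax d : ℤ) + (rowCount L (-1) x - 2 * rowCount L 2 x)) := by
    refine Finset.sum_le_sum fun x _ => ?_
    rw [rowCount_one hL]
    linarith [hd x]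
  rw [Finset.sum_add_distrib, Finset.sum_const, nsmul_eq_mul, card_nbrHat hL] at h1
  have h2 : ((d v : ℤ) - rowCount L 2 v + 2 * rowCount L (-1) v) * dmax d ≤
      (dmax d : ℤ) * (dmax d - rowCount L 2 v + 2 * rowCount L (-1) v) := by
    rw [mul_comm]
    exact mul_le_mul_of_nonneg_left (by linarith [hd v]) (by positivity)
  linarith

/-- Every pair `(a, b)` with label `1` is either admissible or is excluded by one of six
conditions: the other coincidences among the vertices force `L a1 b ≠ 0` or `L a b2 ≠ 0`. -/
lemma pointwise_bound {d : Fin n → ℕ} {L : Matrix (Fin n) (Fin n) ℤ} (hL : IsEncoding d L)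
    {a1 b1 a2 b2 : Fin n} (hL1 : L a1 b1 ≠ 0) (hL2 : L a2 b2 = 1) (a b : Fin n) :
    (if L a b = 1 then (1 : ℤ) else 0) ≤
      (if L a b = 1 ∧ L a1 b = 0 ∧ L a b2 = 0 ∧ a ≠ a1 ∧ a ≠ b1 ∧ a ≠ a2 ∧ a ≠ b2 ∧
          b ≠ a1 ∧ b ≠ b1 ∧ b ≠ a2 ∧ b ≠ b2 ∧ a ≠ b then 1 else 0)
      + (if b ∈ nbrHat L a1 then (if L a b = 1 then 1 else 0) else 0)
      + (if a ∈ nbrHat L b2 then (if L a b = 1 then 1 else 0) else 0)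
      + (if b = a1 then (if L a b = 1 then 1 else 0) else 0)
      + (if b = a2 then (if L a b = 1 then 1 else 0) else 0)
      + (if a = b1 then (if L a b = 1 then 1 else 0) else 0)
      + (if a = b2 then (if L a b = 1 then 1 else 0) else 0) := by
  by_cases h : L a b = 1
  swap
  · simp [h]
  have hs := hL.1
  have hab : a ≠ b := by
    rintro rfl
    have := hL.2.1 a
    omega
  have key : (L a1 b = 0 ∧ L a b2 = 0 ∧ a ≠ a1 ∧ a ≠ b1 ∧ a ≠ a2 ∧ a ≠ b2 ∧
      b ≠ a1 ∧ b ≠ b1 ∧ b ≠ a2 ∧ b ≠ b2 ∧ a ≠ b) ∨ b ∈ nbrHat L a1 ∨ a ∈ nbrHat L b2 ∨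
      b = a1 ∨ b = a2 ∨ a = b1 ∨ a = b2 := by
    simp only [nbrHat, Set.mem_ofPred_eq]
    rw [hs b2 a]
    by_contra hcon
    simp only [not_or, not_and, not_not] at hcon
    obtain ⟨h0, h1, h2, h3, h4, h5, h6⟩ := hcon
    have e1 := h1 h3
    have e2 := h2 h6
    refine hab (h0 e1 e2 ?_ h5 ?_ h6 h3 ?_ h4 ?_)
    · rintro rfl; omega
    · rintro rfl; omega
    · rintro rfl; exact hL1 e1
    · rintro rfl; omega
  simp only [h, if_true, true_and]
  have hi : ∀ (P : Prop) [Decidable P], (0 : ℤ) ≤ if P then 1 else 0 := fun P _ => by split_ifs <;> norm_num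
  have i1 := hi (b ∈ nbrHat L a1)
  have i2 := hi (a ∈ nbrHat L b2)
  have i3 := hi (b = a1)
  have i4 := hi (b = a2)
  have i5 := hi (a = b1)
  have i6 := hi (a = b2)
  have i0 := hi (L a1 b = 0 ∧ L a b2 = 0 ∧ a ≠ a1 ∧ a ≠ b1 ∧ a ≠ a2 ∧ a ≠ b2 ∧
      b ≠ a1 ∧ b ≠ b1 ∧ b ≠ a2 ∧ b ≠ b2 ∧ a ≠ b)
  rcases key with k | k | k | k | k | k | k
  · rw [if_pos k]; linarith
  · rw [if_pos k]; linarith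
  · rw [if_pos k]; linarith
  · rw [if_pos k] at i3 ⊢; linarith
  · rw [if_pos k] at i4 ⊢; linarith
  · rw [if_pos k] at i5 ⊢; linarith
  · rw [if_pos k] at i6 ⊢; linarith

/-- Counting label-`1` pairs by their first vertex. -/
lemma sum_fst (L : Matrix (Fin n) (Fin n) ℤ) (P : Fin n → Prop) [DecidablePred P] :
    (∑ a, ∑ b, if P a then (if L a b = 1 then (1 : ℤ) else 0) else 0) =
      ∑ x ∈ Finset.univ.filter P, rowCount L 1 x := by
  rw [Finset.sum_filter]
  refine Finset.sum_congr rfl fun a _ => ?_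
  split_ifs <;> simp [rowCount]

/-- Counting label-`1` pairs by their second vertex. -/
lemma sum_snd {d : Fin n → ℕ} {L : Matrix (Fin n) (Fin n) ℤ} (hL : IsEncoding d L)
    (P : Fin n → Prop) [DecidablePred P] :
    (∑ a, ∑ b, if P b then (if L a b = 1 then (1 : ℤ) else 0) else 0) =
      ∑ x ∈ Finset.univ.filter P, rowCount L 1 x := by
  rw [← sum_fst, Finset.sum_comm]
  simp_rw [fun a b => hL.1 a b]

/-- Lower bound on the number of ordered pairs `(a₃, b₃)` with `L(a₃,b₃) = 1`,
`L(a₁,b₃) = L(a₃,b₂) = 0` and `a₁, b₁, a₂, b₂, a₃, b₃` all distinct. -/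
theorem choose_third_edge_lower_bound
    (d : Fin n → ℕ) (L : Matrix (Fin n) (Fin n) ℤ) (hL : IsEncoding d L)
    (p q : ℕ)
    (hp : (labelEdges L 2).ncard = p)
    (hq : (labelEdges L (-1)).ncard = q)
    (a1 b1 a2 b2 : Fin n)
    (hdist : a1 ≠ b1 ∧ a1 ≠ a2 ∧ a1 ≠ b2 ∧ b1 ≠ a2 ∧ b1 ≠ b2 ∧ a2 ≠ b2)
    (hL1 : L a1 b1 ≠ 0) (hL2 : L a2 b2 = 1) :
    (M d : ℤ) - 4 * p + 2 * q -
        ((dmax d : ℤ) *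
            (2 * (dmax d : ℤ) - ((zeta L a1 : ℤ) + zeta L b2)
              + 2 * ((eta L a1 : ℤ) + eta L b2) + 4)
          + ((eta L a1 : ℤ) + eta L b1 + eta L a2 + eta L b2)
          - 2 * ((zeta L a1 : ℤ) + zeta L b1 + zeta L a2 + zeta L b2)
          + ∑ x ∈ Finset.univ.filter (· ∈ nbrHat L a1),
              ((eta L x : ℤ) - 2 * zeta L x)
          + ∑ y ∈ Finset.univ.filter (· ∈ nbrHat L b2),
              ((eta L y : ℤ) - 2 * zeta L y)) ≤
      ({ab : Fin n × Fin n |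
          L ab.1 ab.2 = 1 ∧ L a1 ab.2 = 0 ∧ L ab.1 b2 = 0 ∧
          ab.1 ≠ a1 ∧ ab.1 ≠ b1 ∧ ab.1 ≠ a2 ∧ ab.1 ≠ b2 ∧
          ab.2 ≠ a1 ∧ ab.2 ≠ b1 ∧ ab.2 ≠ a2 ∧ ab.2 ≠ b2 ∧ ab.1 ≠ ab.2}.ncard : ℤ) := by
  have hz : ∀ v, (zeta L v : ℤ) = rowCount L 2 v := ncard_row_eq hL (by norm_num)
  have he : ∀ v, (eta L v : ℤ) = rowCount L (-1) v := ncard_row_eq hL (by norm_num)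
  have hd : ∀ x, (d x : ℤ) ≤ dmax d := fun x => by
    exact_mod_cast Finset.le_sup (f := d) (Finset.mem_univ x)
  have hsum : ∑ v, rowCount L 1 v = (M d : ℤ) - 4 * p + 2 * q := by
    have h2 := sum_rowCount hL (c := 2) (by norm_num)
    have h1 := sum_rowCount hL (c := -1) (by norm_num)
    rw [hp] at h2
    rw [hq] at h1
    simp_rw [rowCount_one hL]
    rw [Finset.sum_add_distrib, Finset.sum_sub_distrib, ← Finset.mul_sum, h1, h2, M]
    push_cast
    ring
  have hmain := Finset.sum_le_sum fun a (_ : a ∈ Finset.univ) =>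
    Finset.sum_le_sum fun b (_ : b ∈ Finset.univ) => pointwise_bound hL hL1 hL2 a b
  simp only [Finset.sum_add_distrib] at hmain
  rw [sum_snd hL (· ∈ nbrHat L a1), sum_fst L (· ∈ nbrHat L b2), sum_snd hL (· = a1),
    sum_snd hL (· = a2), sum_fst L (· = b1), sum_fst L (· = b2)] at hmain
  have hone : ∀ v : Fin n, ∑ x ∈ Finset.univ.filter (· = v), rowCount L 1 x =
      d v - 2 * rowCount L 2 v + rowCount L (-1) v := fun v => by
    rw [← rowCount_one hL, Finset.sum_filter]
    simp
  change ∑ v, rowCount L 1 v ≤ _ at hmain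
  rw [hsum, hone, hone, hone, hone, ← Fintype.sum_prod_type', Finset.sum_boole] at hmain
  rw [Set.ncard_eq_toFinset_card', Set.toFinset_ofPred]
  simp only [hz, he]
  have n1 := sum_nbrHat_le hL a1
  have n2 := sum_nbrHat_le hL b2
  linarith [hd a1, hd a2, hd b1, hd b2]

end SwitchChain
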